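/- Let G be a supergraceful graph with p vertices and q edges admitting a total labeling φ such that 1 is a vertex label (1 ∈ φ(V)). Then for every integer t ≥ 0 there exists a supergraceful graph with p + t vertices and q + t edges containing G as an induced subgraph. -/

import Mathlib

/-- The induced edge label `|φ(u) − φ(v)|` of an edge, as a function on `Sym2 V`. -/
def edgeLabel {V : Type*} (φ : V → ℕ) : Sym2 V → ℕ :=
  Sym2.lift ⟨fun u v => Nat.dist (φ u) (φ v), fun u v => Nat.dist_comm (φ u) (φ v)⟩

/-- `φ` is a graceful labeling of the graph `G` with `q` edges: it is injective,
takes values in `{0, 1, ..., q}`, and the induced edge labels `|φ(u) − φ(v)|`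
form exactly the set `{1, 2, ..., q}`, each value occurring once. -/
def IsGracefulLabeling {V : Type*} (G : SimpleGraph V) (φ : V → ℕ) : Prop :=
  Function.Injective φ ∧
  (∀ v, φ v ≤ Nat.card G.edgeSet) ∧
  Set.InjOn (edgeLabel φ) G.edgeSet ∧
  edgeLabel φ '' G.edgeSet = Set.Icc 1 (Nat.card G.edgeSet)

/-- A graph is graceful if it admits a graceful labeling. -/
def IsGraceful {V : Type*} (G : SimpleGraph V) : Prop :=
  ∃ φ : V → ℕ, IsGracefulLabeling G φ

/-- `φ` is a total labeling of the graph `G` with `p` vertices and `q` edges: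
it is injective, the induced edge labels are pairwise distinct, no value is both
a vertex label and an edge label, and the vertex labels together with the edge
labels form exactly the set `{1, 2, ..., p+q}`. -/
def IsTotalLabeling {V : Type*} (G : SimpleGraph V) (φ : V → ℕ) : Prop :=
  Function.Injective φ ∧
  Set.InjOn (edgeLabel φ) G.edgeSet ∧
  Disjoint (Set.range φ) (edgeLabel φ '' G.edgeSet) ∧
  Set.range φ ∪ edgeLabel φ '' G.edgeSet = Set.Icc 1 (Nat.card V + Nat.card G.edgeSet)

/-- A graph is supergraceful if it admits a total labeling. -/
def IsSupergraceful {V : Type*} (G : SimpleGraph V) : Prop :=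
  ∃ φ : V → ℕ, IsTotalLabeling G φ

/-!
Let `N = p + q`, and join a new vertex labeled `N + 2` to the vertex labeled `1`. The new edge gets
the label `N + 1`, so the labels `N + 1` and `N + 2` are added to `{1, ..., N}`. The result is again
a total labeling using `1` on a vertex, and the construction can be repeated.
-/

theorem edgeLabel_map {V W : Type*} (f : V → W) (ψ : W → ℕ) (e : Sym2 V) :
    edgeLabel ψ (e.map f) = edgeLabel (ψ ∘ f) e :=
  e.inductionOn fun _ _ ↦ rfl

theorem iso_image_edgeSet {V W : Type*} {G : SimpleGraph V} {H : SimpleGraph W} (f : H ≃g G) :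
    Sym2.map f '' H.edgeSet = G.edgeSet := by
  refine f.toHom.image_edgeSet_subset.antisymm fun e he ↦ ?_
  obtain ⟨⟨e', he'⟩, heq⟩ := f.mapEdgeSet.surjective ⟨e, he⟩
  exact ⟨e', he', congrArg Subtype.val heq⟩

/-- The graph obtained from `G` by joining a new vertex `none` to the single vertex `v`; the old
vertices are embedded by `some`. -/
def addLeaf {V : Type*} (G : SimpleGraph V) (v : V) : SimpleGraph (Option V) :=
  G.map Function.Embedding.some ⊔ SimpleGraph.edge none (some v)

section AddLeaf

open Set

variable {V : Type*} (G : SimpleGraph V) (v : V)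

theorem nonempty_embedding_addLeaf : Nonempty (G ↪g addLeaf G v) := by
  refine ⟨⟨Function.Embedding.some, fun {a b} ↦ ?_⟩⟩
  simpa [addLeaf, SimpleGraph.edge_adj] using
    SimpleGraph.map_adj_apply (G := G) (f := Function.Embedding.some) (a := a) (b := b)

theorem edgeSet_addLeaf :
    (addLeaf G v).edgeSet = insert s(none, some v) (Sym2.map some '' G.edgeSet) := by
  rw [addLeaf, SimpleGraph.edgeSet_sup, SimpleGraph.edgeSet_map,
    SimpleGraph.edgeSet_edge_of_ne (Option.some_ne_none v).symm, union_singleton]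
  rfl

theorem leafEdge_notMem_image_some (S : Set (Sym2 V)) : s(none, some v) ∉ Sym2.map some '' S := by
  rintro ⟨e, -, he⟩
  have : none ∈ e.map some := he ▸ Sym2.mem_mk_left none (some v)
  simp at this

theorem card_edgeSet_addLeaf [Finite G.edgeSet] :
    Nat.card (addLeaf G v).edgeSet = Nat.card G.edgeSet + 1 := by
  rw [edgeSet_addLeaf, Nat.card_coe_set_eq, Nat.card_coe_set_eq,
    ncard_insert_of_notMem (leafEdge_notMem_image_some v _) (toFinite _),
    ncard_image_of_injective _ (Sym2.map.injective (Option.some_injective V))]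

theorem image_edgeLabel_addLeaf (ψ : Option V → ℕ) :
    edgeLabel ψ '' (addLeaf G v).edgeSet =
      insert (Nat.dist (ψ none) (ψ (some v))) (edgeLabel (ψ ∘ some) '' G.edgeSet) := by
  rw [edgeSet_addLeaf, image_insert_eq, image_image]
  simp only [edgeLabel_map]
  rfl

theorem injOn_edgeLabel_addLeaf {ψ : Option V → ℕ} (hψ : InjOn (edgeLabel (ψ ∘ some)) G.edgeSet)
    (hv : Nat.dist (ψ none) (ψ (some v)) ∉ edgeLabel (ψ ∘ some) '' G.edgeSet) :
    InjOn (edgeLabel ψ) (addLeaf G v).edgeSet := by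
  have hcomp : edgeLabel ψ ∘ Sym2.map some = edgeLabel (ψ ∘ some) :=
    funext (edgeLabel_map some ψ)
  rw [edgeSet_addLeaf, injOn_insert (leafEdge_notMem_image_some v _), ← image_comp, hcomp]
  exact ⟨InjOn.image_of_comp (hcomp ▸ hψ), hv⟩

end AddLeaf

namespace IsTotalLabeling

open Set

variable {V W : Type*} {G : SimpleGraph V} {H : SimpleGraph W} {φ : V → ℕ}

theorem finite (h : IsTotalLabeling G φ) : Finite V := by
  obtain ⟨hinj, -, -, hunion⟩ := h
  have : Finite (range φ) := (finite_Icc _ _).subset (hunion ▸ subset_union_left)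
  exact Finite.of_injective_finite_range hinj

theorem comp_iso (h : IsTotalLabeling G φ) (f : H ≃g G) : IsTotalLabeling H (φ ∘ f) := by
  obtain ⟨hinj, hinjOn, hdisj, hunion⟩ := h
  have hlabel : edgeLabel (φ ∘ f) = edgeLabel φ ∘ Sym2.map f :=
    funext fun e ↦ (edgeLabel_map f φ e).symm
  have hrange : range (φ ∘ f) = range φ := f.surjective.range_comp φ
  have himage : edgeLabel (φ ∘ f) '' H.edgeSet = edgeLabel φ '' G.edgeSet := by
    rw [hlabel, image_comp, iso_image_edgeSet f]
  refine ⟨hinj.comp f.injective, ?_, ?_, ?_⟩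
  · rw [hlabel]
    exact hinjOn.comp (Sym2.map.injective f.injective).injOn
      (mapsTo_iff_image_subset.2 (iso_image_edgeSet f).subset)
  · rwa [hrange, himage]
  · rw [hrange, himage, Nat.card_congr f.toEquiv, Nat.card_congr f.mapEdgeSet, hunion]

protected theorem addLeaf (h : IsTotalLabeling G φ) {v : V} (hv : φ v = 1) :
    IsTotalLabeling (addLeaf G v)
      (fun o ↦ o.elim (Nat.card V + Nat.card G.edgeSet + 2) φ) := by
  have := h.finite
  obtain ⟨hinj, hinjOn, hdisj, hunion⟩ := h
  set N := Nat.card V + Nat.card G.edgeSet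
  let ψ : Option V → ℕ := fun o ↦ o.elim (N + 2) φ
  have hnew : Nat.dist (ψ none) (ψ (some v)) = N + 1 := by
    simp only [ψ, Option.elim, hv, Nat.dist]
    omega
  have hrange : range ψ = insert (N + 2) (range φ) := Option.range_elim _ _
  have himage : edgeLabel ψ '' (addLeaf G v).edgeSet =
      insert (N + 1) (edgeLabel φ '' G.edgeSet) := by
    rw [image_edgeLabel_addLeaf, hnew]
    rfl
  have hvertex {n : ℕ} (hn : N < n) : n ∉ range φ := fun hmem ↦
    (hunion.subset (Or.inl hmem)).2.not_gt hn
  have hedge {n : ℕ} (hn : N < n) : n ∉ edgeLabel φ '' G.edgeSet := fun hmem ↦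
    (hunion.subset (Or.inr hmem)).2.not_gt hn
  refine ⟨Option.injective_iff.2 ⟨hinj, hvertex (Nat.lt_add_of_pos_right two_pos)⟩,
    injOn_edgeLabel_addLeaf G v hinjOn (hnew ▸ hedge N.lt_succ_self), ?_, ?_⟩
  · rw [hrange, himage, disjoint_insert_left, disjoint_insert_right, mem_insert_iff, not_or]
    exact ⟨⟨by omega, hedge (by omega)⟩, hvertex N.lt_succ_self, hdisj⟩
  · have hcard : Nat.card (Option V) + Nat.card (addLeaf G v).edgeSet = N + 2 := by
      rw [card_edgeSet_addLeaf, Finite.card_option]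
      omega
    rw [hrange, himage, hcard, insert_union, union_insert, hunion,
      insert_Icc_right_eq_Icc_add_one (Nat.le_add_left 1 N)]
    exact insert_Icc_right_eq_Icc_add_one (Nat.le_add_left 1 (N + 1))

end IsTotalLabeling

/-- If `G` is a supergraceful graph with `p` vertices and `q` edges
admitting a total labeling in which `1` is a vertex label, then for every `t ≥ 0`
there is a supergraceful graph with `p + t` vertices and `q + t` edges containing
`G` as an induced subgraph. -/
theorem supergraceful_extension {V : Type*} [Fintype V] (G : SimpleGraph V)
    (φ : V → ℕ) (h : IsTotalLabeling G φ) (h1 : 1 ∈ Set.range φ) (t : ℕ) :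
    ∃ (W : Type) (_ : Fintype W) (H : SimpleGraph W),
      Nat.card W = Nat.card V + t ∧
      Nat.card H.edgeSet = Nat.card G.edgeSet + t ∧
      IsSupergraceful H ∧ Nonempty (G ↪g H) := by
  induction t generalizing V with
  | zero =>
    let f : G ≃g G.overFin rfl := G.overFinIso rfl
    exact ⟨Fin (Fintype.card V), inferInstance, G.overFin rfl, Nat.card_congr f.symm.toEquiv,
      Nat.card_congr f.symm.mapEdgeSet, ⟨φ ∘ f.symm, h.comp_iso f.symm⟩, ⟨f.toEmbedding⟩⟩
  | succ t ih =>
    obtain ⟨v, hv⟩ := h1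
    obtain ⟨W, hW, H, hcard, hedges, hH, ⟨g⟩⟩ := ih _ _ (h.addLeaf hv) ⟨some v, hv⟩
    obtain ⟨i⟩ := nonempty_embedding_addLeaf G v
    refine ⟨W, hW, H, ?_, ?_, hH, ⟨g.comp i⟩⟩
    · rw [hcard, Finite.card_option, add_assoc, add_comm 1]
    · rw [hedges, card_edgeSet_addLeaf, add_assoc, add_comm 1]
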